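/- For each fixed integer j ≥ 2, ⟨f_j, f_k⟩ is asymptotically equivalent, as k → ∞, to ((j−1)/j)·(log k)/(2k); that is, lim_{k→∞} ⟨f_j, f_k⟩ / ((log k)/(2k)) = (j−1)/j. -/

import Mathlib

/-!
On `(1/(n+1), 1/n]` one has `⌊1/x⌋ = n`, and `f k x = (n mod k)/k` there. Hence the part of
`k * ⟨f_j, f_k⟩` coming from `(1/k, 1]` is `∑_{n<k} ((n mod j)/j) / (n+1)`, the factor
`(n mod k)/k = n/k` cancelling against the length `1/(n(n+1))` of the interval. As `0 ≤ f ≤ 1`, the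
part coming from `(0, 1/k]` lies in `[0, 1]`.

The average of `n mod j` over a period is `(j-1)/2`, and the partial sums of `n mod j - (j-1)/2` are
bounded, so Abel summation (`abel_bound`) replaces `n mod j` by its average at bounded cost, leaving
`(j-1)/(2j)` times a harmonic sum. So `k * ⟨f_j, f_k⟩ = (j-1)/(2j) * log k + O(1)` (`main_bound`).
-/

open MeasureTheory

/-- `f k x = (1/k)⌊1/x⌋ − ⌊1/(kx)⌋`. -/
noncomputable def f (k : ℕ) (x : ℝ) : ℝ := (⌊1/x⌋ : ℝ) / k - (⌊1/(k*x)⌋ : ℝ)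

/-- The inner product of `L²(0,1)`: `⟨g,h⟩ = ∫₀¹ g(x)h(x) dx`. -/
noncomputable def ip (g h : ℝ → ℝ) : ℝ := ∫ x in Set.Ioc (0:ℝ) 1, g x * h x

/-- `f k` depends only on the residue modulo `k` of `⌊1/x⌋`. -/
lemma f_eq (k : ℕ) (hk : 0 < k) (x : ℝ) (hx : 0 < x) :
    f k x = ((⌊1/x⌋₊ % k : ℕ) : ℝ) / k := by
  have hk' : (0:ℝ) < k := by exact_mod_cast hk
  have h1 : (⌊1/x⌋ : ℝ) = (⌊1/x⌋₊ : ℝ) := (natCast_floor_eq_intCast_floor (by positivity)).symm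
  have h2 : (⌊1/(k*x)⌋ : ℝ) = ((⌊1/x⌋₊ / k : ℕ) : ℝ) := by
    rw [← Nat.floor_div_natCast, natCast_floor_eq_intCast_floor (by positivity),
      div_div, mul_comm]
  unfold f
  rw [h1, h2]
  have h3 : (k:ℝ) * ((⌊1/x⌋₊ / k : ℕ) : ℝ) + ((⌊1/x⌋₊ % k : ℕ) : ℝ) = (⌊1/x⌋₊ : ℝ) := by
    exact_mod_cast Nat.div_add_mod _ _
  rw [← h3]
  field_simp
  ring

lemma f_mem (k : ℕ) (hk : 0 < k) (x : ℝ) (hx : 0 < x) : 0 ≤ f k x ∧ f k x ≤ 1 := by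
  have hk' : (0:ℝ) < k := by exact_mod_cast hk
  rw [f_eq k hk x hx]
  refine ⟨by positivity, ?_⟩
  rw [div_le_one hk']
  exact_mod_cast (Nat.mod_lt _ hk).le

lemma f_measurable (k : ℕ) : Measurable (f k) := by
  unfold f
  have h1 : Measurable fun x : ℝ => (⌊1/x⌋ : ℝ) :=
    measurable_from_top.comp (Int.measurable_floor.comp (by fun_prop))
  have h2 : Measurable fun x : ℝ => (⌊1/(k*x)⌋ : ℝ) :=
    measurable_from_top.comp (Int.measurable_floor.comp (by fun_prop))
  exact (h1.div_const _).sub h2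

lemma prod_integrableOn (j k : ℕ) (hj : 0 < j) (hk : 0 < k) :
    IntegrableOn (fun x => f j x * f k x) (Set.Ioc 0 1) := by
  refine Measure.integrableOn_of_bounded (M := 1) (by simp)
    ((f_measurable j).mul (f_measurable k)).aestronglyMeasurable ?_
  refine (ae_restrict_iff' measurableSet_Ioc).2 (Filter.Eventually.of_forall fun x hx => ?_)
  obtain ⟨a, b⟩ := f_mem j hj x hx.1
  obtain ⟨c, d⟩ := f_mem k hk x hx.1
  rw [Real.norm_of_nonneg (by positivity)]
  exact mul_le_one₀ b c d

lemma prod_intervalIntegrable (j k : ℕ) (hj : 0 < j) (hk : 0 < k) (a b : ℝ) (ha : 0 ≤ a)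
    (hab : a ≤ b) (hb : b ≤ 1) : IntervalIntegrable (fun x => f j x * f k x) volume a b :=
  (intervalIntegrable_iff_integrableOn_Ioc_of_le hab).2
    ((prod_integrableOn j k hj hk).mono_set (Set.Ioc_subset_Ioc ha hb))

lemma piece (j k n : ℕ) (hj : 0 < j) (hn : 0 < n) (hnk : n < k) :
    ∫ x in ((1:ℝ)/(n+1))..(1/n), f j x * f k x
      = ((n % j : ℕ) : ℝ) / j / (n+1) / k := by
  have hn' : (0:ℝ) < n := by exact_mod_cast hn
  have hk' : (0:ℝ) < k := by exact_mod_cast hn.trans hnk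
  have hj' : (0:ℝ) < j := by exact_mod_cast hj
  have hle : (1:ℝ)/(n+1) ≤ 1/n := by gcongr; linarith
  have hc : ∫ x in ((1:ℝ)/(n+1))..(1/n), f j x * f k x
      = ∫ x in ((1:ℝ)/(n+1))..(1/n), ((n % j : ℕ) : ℝ) / j * ((n:ℝ)/k) := by
    rw [intervalIntegral.integral_of_le hle, intervalIntegral.integral_of_le hle]
    refine setIntegral_congr_fun measurableSet_Ioc fun x hx => ?_
    have hx0 : 0 < x := lt_trans (by positivity) hx.1
    have hfl : ⌊1/x⌋₊ = n := by
      rw [Nat.floor_eq_iff (by positivity)]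
      refine ⟨?_, ?_⟩
      · rw [le_div_comm₀ hn' hx0]; exact hx.2
      · rw [div_lt_comm₀ hx0 (by positivity)]; exact hx.1
    simp only [f_eq j hj x hx0, f_eq k (hn.trans hnk) x hx0, hfl, Nat.mod_eq_of_lt hnk]
  rw [hc, intervalIntegral.integral_const, smul_eq_mul]
  field_simp
  ring

lemma integral_main (j k m : ℕ) (hj : 0 < j) (hmk : m < k) :
    ∫ x in ((1:ℝ)/(m+1))..1, f j x * f k x
      = (∑ n ∈ Finset.range (m+1), ((n % j : ℕ) : ℝ) / j / (n+1)) / k := by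
  induction m with
  | zero => simp
  | succ m ih =>
    have hk : 0 < k := by omega
    have hm1 : (0:ℝ) ≤ m := by positivity
    have hle : (1:ℝ)/(m+1+1) ≤ 1/(m+1) := by gcongr; linarith
    have hle1 : (1:ℝ)/(m+1) ≤ 1 := by rw [div_le_one (by positivity)]; linarith
    have hp := piece j k (m+1) hj (by omega) hmk
    rw [Finset.sum_range_succ, add_div, ← ih (by omega)]
    push_cast at hp ⊢
    rw [← hp, add_comm (∫ x in ((1:ℝ)/(m+1))..1, f j x * f k x)]
    exact (intervalIntegral.integral_add_adjacent_intervals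
      (prod_intervalIntegrable j k hj hk _ _ (by positivity) hle hle1)
      (prod_intervalIntegrable j k hj hk _ _ (by positivity) hle1 le_rfl)).symm

/-- The part of the integral over `(0, 1/k]` is only estimated, by `0 ≤ f ≤ 1`. -/
lemma ip_bounds (j k : ℕ) (hj : 0 < j) (hk : 0 < k) :
    ∑ n ∈ Finset.range k, ((n % j : ℕ) : ℝ) / j / (n+1) ≤ k * ip (f j) (f k) ∧
    k * ip (f j) (f k) ≤ ∑ n ∈ Finset.range k, ((n % j : ℕ) : ℝ) / j / (n+1) + 1 := by
  have hk' : (0:ℝ) < k := by exact_mod_cast hk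
  have hk1 : (1:ℝ) ≤ k := by exact_mod_cast hk
  have h0 : (0:ℝ) ≤ 1/k := by positivity
  have h1 : (1:ℝ)/k ≤ 1 := by rw [div_le_one hk']; exact hk1
  have hm := integral_main j k (k-1) hj (by omega)
  have hkc : ((k-1 : ℕ):ℝ) + 1 = k := by exact_mod_cast Nat.sub_add_cancel hk
  rw [hkc, Nat.sub_add_cancel hk] at hm
  have hi := prod_intervalIntegrable j k hj hk 0 (1/k) le_rfl h0 h1
  have hsplit : ip (f j) (f k) = (∫ x in (0:ℝ)..(1/k), f j x * f k x)
      + ∫ x in ((1:ℝ)/k)..1, f j x * f k x := by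
    rw [intervalIntegral.integral_add_adjacent_intervals hi
      (prod_intervalIntegrable j k hj hk _ _ h0 h1 le_rfl)]
    rw [ip, intervalIntegral.integral_of_le zero_le_one]
  have hlo : 0 ≤ ∫ x in (0:ℝ)..(1/k), f j x * f k x := by
    rw [intervalIntegral.integral_of_le h0]
    refine setIntegral_nonneg measurableSet_Ioc fun x hx => ?_
    exact mul_nonneg (f_mem j hj x hx.1).1 (f_mem k hk x hx.1).1
  have hhi : ∫ x in (0:ℝ)..(1/k), f j x * f k x ≤ 1/k := by
    have : ∫ x in (0:ℝ)..(1/k), f j x * f k x ≤ ∫ x in (0:ℝ)..(1/k), (1:ℝ) := by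
      refine intervalIntegral.integral_mono_on_of_le_Ioo h0 hi (by simp) fun x hx => ?_
      exact mul_le_one₀ (f_mem j hj x hx.1).2 (f_mem k hk x hx.1).1 (f_mem k hk x hx.1).2
    simpa using this
  rw [hsplit, hm, mul_add, mul_div_cancel₀ _ hk'.ne']
  have h2 := mul_le_mul_of_nonneg_left hhi hk'.le
  rw [mul_one_div_cancel hk'.ne'] at h2
  have h3 := mul_nonneg hk'.le hlo
  constructor <;> linarith

/-- The partial sum `∑_{i<n} (i mod j - (j-1)/2)` in closed form: it equals `r(r-j)/2` with
`r = n mod j`. -/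
noncomputable def H (j n : ℕ) : ℝ := ((n % j : ℕ) : ℝ) * (((n % j : ℕ) : ℝ) - j) / 2

lemma H_succ (j n : ℕ) (hj : 2 ≤ j) :
    H j (n+1) = H j n + (((n % j : ℕ) : ℝ) - ((j:ℝ)-1)/2) := by
  have hlt := Nat.mod_lt n (show j > 0 by omega)
  have h1 : 1 % j = 1 := Nat.mod_eq_of_lt (by omega)
  unfold H
  rcases Nat.lt_or_ge (n % j + 1) j with h | h
  · have : (n+1) % j = n % j + 1 := by
      rw [Nat.add_mod, h1, Nat.mod_eq_of_lt h]
    rw [this]; push_cast; ring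
  · have h2 : n % j + 1 = j := by omega
    have : (n+1) % j = 0 := by
      rw [Nat.add_mod, h1, h2, Nat.mod_self]
    have h3 : ((n % j : ℕ):ℝ) = j - 1 := by
      rw [eq_sub_iff_add_eq]; exact_mod_cast h2
    rw [this, h3]; push_cast; ring

lemma H_abs (j n : ℕ) (hj : 2 ≤ j) : |H j n| ≤ (j:ℝ)^2 := by
  have hlt : ((n % j : ℕ) : ℝ) ≤ j := by
    exact_mod_cast (Nat.mod_lt n (show j > 0 by omega)).le
  have h0 : (0:ℝ) ≤ ((n % j : ℕ) : ℝ) := by positivity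
  unfold H
  rw [abs_le]
  constructor <;> nlinarith [mul_nonneg h0 (sub_nonneg.2 hlt)]

/-- Summation by parts: the sum minus its boundary term is
`∑_{n<m} H j (n+1) * (1/(n+1) - 1/(n+2))`, and `|H| ≤ j^2` bounds its absolute value by
a telescoping sum. -/
lemma abel_bound (j m : ℕ) (hj : 2 ≤ j) :
    |∑ n ∈ Finset.range m, (((n % j : ℕ) : ℝ) - ((j:ℝ)-1)/2) / (n+1) - H j m / (m+1)|
      ≤ (j:ℝ)^2 * (1 - 1/(m+1)) := by
  induction m with
  | zero => simp [H]
  | succ m ih =>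
    have hm : (0:ℝ) ≤ m := by positivity
    have hd : (0:ℝ) ≤ 1/(m+1) - 1/(m+1+1) := by
      rw [sub_nonneg]; gcongr; linarith
    rw [Finset.sum_range_succ]
    have key : ∑ n ∈ Finset.range m, (((n % j : ℕ) : ℝ) - ((j:ℝ)-1)/2) / (n+1)
          + (((m % j : ℕ) : ℝ) - ((j:ℝ)-1)/2) / (m+1) - H j (m+1) / ((m+1 : ℕ)+1)
        = (∑ n ∈ Finset.range m, (((n % j : ℕ) : ℝ) - ((j:ℝ)-1)/2) / (n+1) - H j m / (m+1))
          + H j (m+1) * (1/(m+1) - 1/(m+1+1)) := by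
      rw [show (((m % j : ℕ) : ℝ) - ((j:ℝ)-1)/2) = H j (m+1) - H j m by
        rw [H_succ j m hj]; ring]
      push_cast
      ring
    rw [key]
    refine (abs_add_le _ _).trans ?_
    rw [abs_mul, abs_of_nonneg hd]
    have := mul_le_mul_of_nonneg_right (H_abs j (m+1) hj) hd
    push_cast
    linarith

lemma sum_bound (j m : ℕ) (hj : 2 ≤ j) :
    |∑ n ∈ Finset.range m, (((n % j : ℕ) : ℝ) - ((j:ℝ)-1)/2) / (n+1)| ≤ 2 * (j:ℝ)^2 := by
  have h1 := abel_bound j m hj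
  have hm : (0:ℝ) ≤ m := by positivity
  have h2 : |H j m / (m+1)| ≤ (j:ℝ)^2 := by
    rw [abs_div, abs_of_pos (show (0:ℝ) < m+1 by positivity)]
    exact (div_le_self (abs_nonneg _) (by linarith)).trans (H_abs j m hj)
  have h3 : (j:ℝ)^2 * (1 - 1/(m+1)) ≤ (j:ℝ)^2 :=
    mul_le_of_le_one_right (by positivity) (by
      have : (0:ℝ) ≤ 1/(m+1) := by positivity
      linarith)
  rw [abs_le] at *
  constructor <;> linarith

lemma main_bound (j k : ℕ) (hj : 2 ≤ j) (hk : 0 < k) :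
    |k * ip (f j) (f k) - ((j:ℝ)-1)/(2*j) * Real.log k| ≤ 2 * (j:ℝ)^2 + 2 := by
  have hj1 : (2:ℝ) ≤ j := by exact_mod_cast hj
  have hk' : (0:ℝ) < k := by exact_mod_cast hk
  obtain ⟨h1, h2⟩ := ip_bounds j k (by omega) hk
  have hb := sum_bound j k hj
  have hhar : ((harmonic k : ℚ) : ℝ) = ∑ n ∈ Finset.range k, 1/((n:ℝ)+1) := by
    simp [harmonic]
  have hl := log_add_one_le_harmonic k
  have hu := harmonic_le_one_add_log k
  have hll : Real.log k ≤ Real.log ((k+1 : ℕ) : ℝ) :=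
    Real.log_le_log hk' (by push_cast; linarith)
  have hs : ∑ n ∈ Finset.range k, ((n % j : ℕ) : ℝ) / j / (n+1)
      = (∑ n ∈ Finset.range k, (((n % j : ℕ) : ℝ) - ((j:ℝ)-1)/2) / (n+1)) / j
        + ((j:ℝ)-1)/(2*j) * (harmonic k : ℚ) := by
    rw [hhar, Finset.mul_sum, Finset.sum_div, ← Finset.sum_add_distrib]
    refine Finset.sum_congr rfl fun n _ => ?_
    field_simp
    ring
  have hb' : |(∑ n ∈ Finset.range k, (((n % j : ℕ) : ℝ) - ((j:ℝ)-1)/2) / (n+1)) / j|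
      ≤ 2 * (j:ℝ)^2 := by
    rw [abs_div, Nat.abs_cast]
    exact (div_le_self (abs_nonneg _) (by linarith)).trans hb
  have hc0 : 0 ≤ ((j:ℝ)-1)/(2*j) := div_nonneg (by linarith) (by linarith)
  have hc1 : ((j:ℝ)-1)/(2*j) ≤ 1 := by rw [div_le_one (by linarith)]; linarith
  have e1 := mul_le_mul_of_nonneg_left (hll.trans hl) hc0
  have e2 := mul_le_mul_of_nonneg_left hu hc0
  rw [abs_le] at *
  constructor <;> linarith

/-- `⟨f_j,f_k⟩ ∼ ((j−1)/j)·(log k)/(2k)` as `k → ∞`. -/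
theorem stmt_18 (j : ℕ) (hj : 2 ≤ j) :
    Filter.Tendsto (fun k : ℕ => ip (f j) (f k) / (Real.log k / (2 * k)))
      Filter.atTop (nhds (((j : ℝ) - 1) / j)) := by
  have hj1 : (2:ℝ) ≤ j := by exact_mod_cast hj
  have hlog : Filter.Tendsto (fun k : ℕ => Real.log k) Filter.atTop Filter.atTop :=
    Real.tendsto_log_atTop.comp tendsto_natCast_atTop_atTop
  have hz : Filter.Tendsto (fun k : ℕ => 2 * (2 * (j:ℝ)^2 + 2) / Real.log k)
      Filter.atTop (nhds 0) := hlog.const_div_atTop _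
  rw [tendsto_iff_norm_sub_tendsto_zero]
  refine squeeze_zero' (Filter.Eventually.of_forall fun _ => norm_nonneg _) ?_ hz
  filter_upwards [hlog.eventually_gt_atTop 0, Filter.eventually_gt_atTop 0] with k hl hk
  have hk' : (0:ℝ) < k := by exact_mod_cast hk
  have hb := main_bound j k hj hk
  have he : ip (f j) (f k) / (Real.log k / (2 * k)) - ((j : ℝ) - 1) / j
      = 2 * (k * ip (f j) (f k) - ((j:ℝ)-1)/(2*j) * Real.log k) / Real.log k := by
    field_simp
  rw [he, Real.norm_eq_abs, abs_div, abs_mul, abs_of_pos hl, abs_two]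
  gcongr
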